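/- For every L_⊳-formula φ: φ ∈ ICK if and only if φ is valid on every conditional Kripke frame (soundness and completeness of ICK with respect to conditional Kripke frames). -/

import Mathlib

/-! ## The conditional language `L_⊳` -/

/-- Formulas of the conditional language `L_⊳`, with proposition letters
indexed by the countable set `ℕ`. -/
inductive CForm : Type where
  | var : ℕ → CForm
  | bot : CForm
  | and : CForm → CForm → CForm
  | or : CForm → CForm → CForm
  | imp : CForm → CForm → CForm
  | cond : CForm → CForm → CForm

/-- `⊤ := ⊥ → ⊥`. -/
def cTop : CForm := CForm.imp CForm.bot CForm.bot

/-- `φ ↔ ψ := (φ → ψ) ∧ (ψ → φ)`. -/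
def cIff (φ ψ : CForm) : CForm := CForm.and (CForm.imp φ ψ) (CForm.imp ψ φ)

/-- Uniform substitution of formulas for proposition letters. -/
def psubst (σ : ℕ → CForm) : CForm → CForm
  | CForm.var q => σ q
  | CForm.bot => CForm.bot
  | CForm.and φ ψ => CForm.and (psubst σ φ) (psubst σ ψ)
  | CForm.or φ ψ => CForm.or (psubst σ φ) (psubst σ ψ)
  | CForm.imp φ ψ => CForm.imp (psubst σ φ) (psubst σ ψ)
  | CForm.cond φ ψ => CForm.cond (psubst σ φ) (psubst σ ψ)

/-- The logic `ICK ⊕ Γ`: the smallest set of `L_⊳`-formulas containing an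
axiomatisation of intuitionistic propositional logic, the formulas of `Γ`, the
axioms `(k_c)` and `(n_c)`, closed under uniform substitution, modus ponens and
the two congruence rules. -/
inductive ICK (Γ : Set CForm) : CForm → Prop where
  | prem {φ : CForm} : φ ∈ Γ → ICK Γ φ
  | a1 : ICK Γ (CForm.imp (CForm.and (CForm.var 0) (CForm.var 1)) (CForm.var 0))
  | a2 : ICK Γ (CForm.imp (CForm.and (CForm.var 0) (CForm.var 1)) (CForm.var 1))
  | a3 : ICK Γ (CForm.imp (CForm.imp (CForm.var 0) (CForm.var 1))
      (CForm.imp (CForm.imp (CForm.var 0) (CForm.var 2))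
        (CForm.imp (CForm.var 0) (CForm.and (CForm.var 1) (CForm.var 2)))))
  | a4 : ICK Γ (CForm.imp (CForm.var 0) (CForm.or (CForm.var 0) (CForm.var 1)))
  | a5 : ICK Γ (CForm.imp (CForm.var 1) (CForm.or (CForm.var 0) (CForm.var 1)))
  | a6 : ICK Γ (CForm.imp (CForm.imp (CForm.var 0) (CForm.var 2))
      (CForm.imp (CForm.imp (CForm.var 1) (CForm.var 2))
        (CForm.imp (CForm.or (CForm.var 0) (CForm.var 1)) (CForm.var 2))))
  | a7 : ICK Γ (CForm.imp CForm.bot (CForm.var 0))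
  | a8 : ICK Γ (CForm.imp (CForm.var 0) (CForm.imp (CForm.var 1) (CForm.var 0)))
  | a9 : ICK Γ (CForm.imp
      (CForm.imp (CForm.var 0) (CForm.imp (CForm.var 1) (CForm.var 2)))
      (CForm.imp (CForm.imp (CForm.var 0) (CForm.var 1))
        (CForm.imp (CForm.var 0) (CForm.var 2))))
  | kc : ICK Γ (cIff (CForm.cond (CForm.var 0) (CForm.and (CForm.var 1) (CForm.var 2)))
      (CForm.and (CForm.cond (CForm.var 0) (CForm.var 1))
        (CForm.cond (CForm.var 0) (CForm.var 2))))
  | nc : ICK Γ (cIff (CForm.cond (CForm.var 0) cTop) cTop)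
  | subst {φ : CForm} (σ : ℕ → CForm) : ICK Γ φ → ICK Γ (psubst σ φ)
  | mp {φ ψ : CForm} : ICK Γ (CForm.imp φ ψ) → ICK Γ φ → ICK Γ ψ
  | congL {φ ψ χ : CForm} :
      ICK Γ (cIff φ ψ) → ICK Γ (cIff (CForm.cond φ χ) (CForm.cond ψ χ))
  | congR {φ ψ χ : CForm} :
      ICK Γ (cIff φ ψ) → ICK Γ (cIff (CForm.cond χ φ) (CForm.cond χ ψ))

/-! ## Conditional Kripke frames and semantics -/

/-- `a` is an upset (upward closed set) w.r.t. the relation `le`. -/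
def IsUpset {X : Type} (le : X → X → Prop) (a : Set X) : Prop :=
  ∀ ⦃x y : X⦄, le x y → x ∈ a → y ∈ a

/-- The upward closure `↑s` of a set `s` w.r.t. the relation `le`. -/
def upCl {X : Type} (le : X → X → Prop) (s : Set X) : Set X :=
  {z | ∃ y ∈ s, le y z}

/-- Truth sets of `L_⊳`-formulas, by intuitionistic Kripke semantics for the
propositional connectives, where `x ⊨ φ ⊳ ψ` iff every `y` with
`x R_{V(φ)} y` satisfies `ψ` (here `V(φ)` is the truth set of `φ`). -/
def csat {X : Type} (le : X → X → Prop) (R : Set X → X → X → Prop)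
    (V : ℕ → Set X) : CForm → Set X
  | CForm.var p => V p
  | CForm.bot => ∅
  | CForm.and φ ψ => csat le R V φ ∩ csat le R V ψ
  | CForm.or φ ψ => csat le R V φ ∪ csat le R V ψ
  | CForm.imp φ ψ => {x | ∀ y, le x y → y ∈ csat le R V φ → y ∈ csat le R V ψ}
  | CForm.cond φ ψ => {x | ∀ y, R (csat le R V φ) x y → y ∈ csat le R V ψ}

/-- A conditional Kripke frame: a nonempty preordered set `(X, le)` with a
family of relations `R a` (indexed by the upsets `a`) satisfying the coherence
condition `(≤ ∘ R_a) ⊆ (R_a ∘ ≤)`. -/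
structure CondFrame where
  X : Type
  ne : Nonempty X
  le : X → X → Prop
  le_refl : ∀ x, le x x
  le_trans : ∀ ⦃x y z⦄, le x y → le y z → le x z
  R : Set X → X → X → Prop
  coh : ∀ a : Set X, IsUpset le a →
    ∀ ⦃x y z⦄, le x y → R a y z → ∃ w, R a x w ∧ le w z

/-- Validity on a conditional Kripke frame: truth at every world under every
valuation of the proposition letters by upsets. -/
def CondFrame.valid (F : CondFrame) (φ : CForm) : Prop :=
  ∀ V : ℕ → Set F.X, (∀ p, IsUpset F.le (V p)) → ∀ x, x ∈ csat F.le F.R V φ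

/-! ## Conditional Heyting algebras -/

/-- A conditional Heyting algebra: a Heyting algebra with a binary operation
`cond` (written `⊳` in the paper) preserving finite meets in its second
argument. -/
class CondHeyting (A : Type) extends HeytingAlgebra A where
  cond : A → A → A
  cond_inf : ∀ a b c : A, cond a (b ⊓ c) = cond a b ⊓ cond a c
  cond_top : ∀ a : A, cond a ⊤ = ⊤

/-- Evaluation of an `L_⊳`-formula in a conditional Heyting algebra under an
assignment `σ` of the proposition letters. -/
def evalCHA {A : Type} [CondHeyting A] (σ : ℕ → A) : CForm → A
  | CForm.var p => σ p
  | CForm.bot => ⊥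
  | CForm.and φ ψ => evalCHA σ φ ⊓ evalCHA σ ψ
  | CForm.or φ ψ => evalCHA σ φ ⊔ evalCHA σ ψ
  | CForm.imp φ ψ => evalCHA σ φ ⇨ evalCHA σ ψ
  | CForm.cond φ ψ => CondHeyting.cond (evalCHA σ φ) (evalCHA σ ψ)

/-- A formula is satisfied in a conditional Heyting algebra if it evaluates to
`⊤` under every assignment. -/
def chaSat (A : Type) [CondHeyting A] (φ : CForm) : Prop :=
  ∀ σ : ℕ → A, evalCHA σ φ = ⊤

/-- A prime filter: a proper, nonempty, upward closed subset, closed under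
binary meets, such that `a ⊔ b ∈ x` implies `a ∈ x` or `b ∈ x`. -/
def IsPrimeFilter {A : Type} [Lattice A] (x : Set A) : Prop :=
  x.Nonempty ∧ x ≠ Set.univ ∧
  (∀ ⦃a b : A⦄, a ∈ x → a ≤ b → b ∈ x) ∧
  (∀ ⦃a b : A⦄, a ∈ x → b ∈ x → a ⊓ b ∈ x) ∧
  (∀ ⦃a b : A⦄, a ⊔ b ∈ x → a ∈ x ∨ b ∈ x)

/-! ## General conditional frames -/

/-- A general conditional frame `(X, ≤, 𝓡, A)`. -/
structure GenFrame where
  X : Type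
  le : X → X → Prop
  le_refl : ∀ x, le x x
  le_trans : ∀ ⦃x y z⦄, le x y → le y z → le x z
  le_antisymm : ∀ ⦃x y⦄, le x y → le y x → x = y
  A : Set (Set X)
  upA : ∀ a ∈ A, IsUpset le a
  univ_mem : Set.univ ∈ A
  empty_mem : ∅ ∈ A
  inter_mem : ∀ a ∈ A, ∀ b ∈ A, a ∩ b ∈ A
  union_mem : ∀ a ∈ A, ∀ b ∈ A, a ∪ b ∈ A
  R : Set X → X → X → Prop
  himp_mem : ∀ a ∈ A, ∀ b ∈ A, {x | ∀ y, le x y → y ∈ a → y ∈ b} ∈ A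
  cimp_mem : ∀ a ∈ A, ∀ b ∈ A, {x | ∀ y, R a x y → y ∈ b} ∈ A
  coh : ∀ a ∈ A, ∀ ⦃x y z⦄, le x y → R a y z → ∃ w, R a x w ∧ le w z

/-- The carrier of the complex algebra of a general frame: the admissible
upsets. -/
def GenFrame.AUp (G : GenFrame) : Type := {a : Set G.X // a ∈ G.A}

instance GenFrame.instLatticeAUp (G : GenFrame) : Lattice G.AUp where
  le a b := a.val ⊆ b.val
  le_refl a := subset_rfl
  le_trans a b c h h' := Set.Subset.trans h h'
  le_antisymm a b h h' := Subtype.ext (subset_antisymm h h')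
  sup a b := ⟨a.val ∪ b.val, G.union_mem _ a.2 _ b.2⟩
  le_sup_left a b := Set.subset_union_left
  le_sup_right a b := Set.subset_union_right
  sup_le a b c h h' := Set.union_subset h h'
  inf a b := ⟨a.val ∩ b.val, G.inter_mem _ a.2 _ b.2⟩
  inf_le_left a b := Set.inter_subset_left
  inf_le_right a b := Set.inter_subset_right
  le_inf a b c h h' := Set.subset_inter h h'

instance GenFrame.instHeytingAUp (G : GenFrame) : HeytingAlgebra G.AUp :=
  { GenFrame.instLatticeAUp G with
    top := ⟨Set.univ, G.univ_mem⟩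
    le_top := fun a => Set.subset_univ _
    bot := ⟨∅, G.empty_mem⟩
    bot_le := fun a => Set.empty_subset _
    himp := fun a b => ⟨{x | ∀ y, G.le x y → y ∈ a.val → y ∈ b.val},
      G.himp_mem _ a.2 _ b.2⟩
    compl := fun a => ⟨{x | ∀ y, G.le x y → y ∈ a.val → y ∈ (∅ : Set G.X)},
      G.himp_mem _ a.2 _ G.empty_mem⟩
    le_himp_iff := by
      intro a b c
      show a.val ⊆ {x | ∀ y, G.le x y → y ∈ b.val → y ∈ c.val} ↔
        a.val ∩ b.val ⊆ c.val
      constructor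
      · rintro h x ⟨hxa, hxb⟩
        exact h hxa x (G.le_refl x) hxb
      · intro h x hxa y hle hyb
        exact h ⟨G.upA a.val a.2 hle hxa, hyb⟩
    himp_bot := fun a => rfl }

/-- The complex algebra `AUp(G)` of a general frame `G` is a conditional
Heyting algebra, with `a ⊳ b := {x | R_a[x] ⊆ b}`. -/
instance GenFrame.instCondHeytingAUp (G : GenFrame) : CondHeyting G.AUp where
  cond a b := ⟨{x | ∀ y, G.R a.val x y → y ∈ b.val}, G.cimp_mem _ a.2 _ b.2⟩
  cond_inf a b c := Subtype.ext (Set.ext fun x => by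
    show (∀ y, G.R a.val x y → y ∈ b.val ∩ c.val) ↔
      (∀ y, G.R a.val x y → y ∈ b.val) ∧ (∀ y, G.R a.val x y → y ∈ c.val)
    constructor
    · intro h
      exact ⟨fun y hy => (h y hy).1, fun y hy => (h y hy).2⟩
    · rintro ⟨h1, h2⟩ y hy
      exact ⟨h1 y hy, h2 y hy⟩)
  cond_top a := Subtype.ext (Set.ext fun x => by
    show (∀ y, G.R a.val x y → y ∈ (Set.univ : Set G.X)) ↔
      x ∈ (Set.univ : Set G.X)
    exact ⟨fun _ => trivial, fun _ y _ => trivial⟩)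

/-! ## Conditional Esakia spaces -/

/-- A conditional Esakia space: an Esakia space `(X, le, top)` together with a
family of relations `R a` indexed by the clopen upsets `a`, such that
`{x | R_a[x] ⊆ b}` is clopen for clopen upsets `a, b`, each `R_a[x]` is
closed, and `(≤ ∘ R_a ∘ ≤) = R_a`. -/
structure CondEsakia where
  X : Type
  ne : Nonempty X
  le : X → X → Prop
  le_refl : ∀ x, le x x
  le_trans : ∀ ⦃x y z⦄, le x y → le y z → le x z
  le_antisymm : ∀ ⦃x y⦄, le x y → le y x → x = y
  top : TopologicalSpace X
  compact : @CompactSpace X top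
  sep : ∀ x y : X, ¬ le x y →
    ∃ a : Set X, @IsClopen X top a ∧ IsUpset le a ∧ x ∈ a ∧ y ∉ a
  down_clopen : ∀ a : Set X, @IsClopen X top a →
    @IsClopen X top {x | ∃ y ∈ a, le x y}
  R : Set X → X → X → Prop
  box_clopen : ∀ a b : Set X, @IsClopen X top a → IsUpset le a →
    @IsClopen X top b → IsUpset le b →
    @IsClopen X top {x | ∀ y, R a x y → y ∈ b}
  coh : ∀ a : Set X, @IsClopen X top a → IsUpset le a →
    ∀ x z : X, (∃ x' y', le x x' ∧ R a x' y' ∧ le y' z) ↔ R a x z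
  im_closed : ∀ a : Set X, @IsClopen X top a → IsUpset le a →
    ∀ x : X, @IsClosed X top {y | R a x y}

/-- `a` is a clopen upset of the conditional Esakia space `S`. -/
def CondEsakia.ClopUp (S : CondEsakia) (a : Set S.X) : Prop :=
  @IsClopen S.X S.top a ∧ IsUpset S.le a

/-- Validity on a conditional Esakia space: truth at every world under every
valuation of the proposition letters by clopen upsets. -/
def CondEsakia.valid (S : CondEsakia) (φ : CForm) : Prop :=
  ∀ V : ℕ → Set S.X, (∀ p, S.ClopUp (V p)) → ∀ x, x ∈ csat S.le S.R V φ

/-- The family of relations of the empty fill-in `κ_∅(S)`: it agrees with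
`S.R` on clopen upsets and is empty on all other sets. -/
def CondEsakia.emptyFill (S : CondEsakia) : Set S.X → S.X → S.X → Prop :=
  fun a x y => S.ClopUp a ∧ S.R a x y

/-- Validity on the empty fill-in `κ_∅(S)`, a conditional Kripke frame:
truth at every world under every valuation by (arbitrary) upsets. -/
def CondEsakia.emptyFillValid (S : CondEsakia) (φ : CForm) : Prop :=
  ∀ V : ℕ → Set S.X, (∀ p, IsUpset S.le (V p)) →
    ∀ x, x ∈ csat S.le S.emptyFill V φ

/-! ## The modal language `L_□` -/

/-- Formulas of the modal language `L_□`. -/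
inductive MForm : Type where
  | var : ℕ → MForm
  | bot : MForm
  | and : MForm → MForm → MForm
  | or : MForm → MForm → MForm
  | imp : MForm → MForm → MForm
  | box : MForm → MForm

/-- The translation `(−)^p : L_□ → L_⊳`: it fixes proposition letters, `⊥`,
`∧`, `∨`, `→`, and sends `□ψ` to `p ⊳ ψ^p`. -/
def MForm.transl (p : ℕ) : MForm → CForm
  | MForm.var q => CForm.var q
  | MForm.bot => CForm.bot
  | MForm.and φ ψ => CForm.and (φ.transl p) (ψ.transl p)
  | MForm.or φ ψ => CForm.or (φ.transl p) (ψ.transl p)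
  | MForm.imp φ ψ => CForm.imp (φ.transl p) (ψ.transl p)
  | MForm.box φ => CForm.cond (CForm.var p) (φ.transl p)

/-- The proposition letter `p` occurs (as a subformula) in a modal formula. -/
def MForm.occurs (p : ℕ) : MForm → Prop
  | MForm.var q => p = q
  | MForm.bot => False
  | MForm.and φ ψ => φ.occurs p ∨ ψ.occurs p
  | MForm.or φ ψ => φ.occurs p ∨ ψ.occurs p
  | MForm.imp φ ψ => φ.occurs p ∨ ψ.occurs p
  | MForm.box φ => φ.occurs p

/-- Truth sets of `L_□`-formulas in a modal model, by intuitionistic Kripke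
semantics with `x ⊨ □φ` iff every `y` with `x R y` satisfies `φ`. -/
def msat {X : Type} (le : X → X → Prop) (R : X → X → Prop)
    (V : ℕ → Set X) : MForm → Set X
  | MForm.var p => V p
  | MForm.bot => ∅
  | MForm.and φ ψ => msat le R V φ ∩ msat le R V ψ
  | MForm.or φ ψ => msat le R V φ ∪ msat le R V ψ
  | MForm.imp φ ψ => {x | ∀ y, le x y → y ∈ msat le R V φ → y ∈ msat le R V ψ}
  | MForm.box φ => {x | ∀ y, R x y → y ∈ msat le R V φ}

/-- A modal Esakia space: an Esakia space with a relation `R` such that each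
`R[x]` is closed and `R = (≤ ∘ R ∘ ≤)`. -/
structure ModalEsakia where
  X : Type
  ne : Nonempty X
  le : X → X → Prop
  le_refl : ∀ x, le x x
  le_trans : ∀ ⦃x y z⦄, le x y → le y z → le x z
  le_antisymm : ∀ ⦃x y⦄, le x y → le y x → x = y
  top : TopologicalSpace X
  compact : @CompactSpace X top
  sep : ∀ x y : X, ¬ le x y →
    ∃ a : Set X, @IsClopen X top a ∧ IsUpset le a ∧ x ∈ a ∧ y ∉ a
  down_clopen : ∀ a : Set X, @IsClopen X top a →
    @IsClopen X top {x | ∃ y ∈ a, le x y}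
  R : X → X → Prop
  im_closed : ∀ x : X, @IsClosed X top {y | R x y}
  coh : ∀ x z : X, (∃ x' y', le x x' ∧ R x' y' ∧ le y' z) ↔ R x z

/-- Validity on a modal Esakia space: truth everywhere under every valuation
by clopen upsets. -/
def ModalEsakia.valid (M : ModalEsakia) (φ : MForm) : Prop :=
  ∀ V : ℕ → Set M.X, (∀ p, @IsClopen M.X M.top (V p) ∧ IsUpset M.le (V p)) →
    ∀ x, x ∈ msat M.le M.R V φ

/-- Validity on the underlying modal frame `κ(M)` of a modal Esakia space:
truth everywhere under every valuation by arbitrary upsets. -/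
def ModalEsakia.frameValid (M : ModalEsakia) (φ : MForm) : Prop :=
  ∀ V : ℕ → Set M.X, (∀ p, IsUpset M.le (V p)) → ∀ x, x ∈ msat M.le M.R V φ

/-- An `L_□`-formula is d-persistent if its validity on a modal Esakia space
implies its validity on the underlying modal frame. -/
def DPersistent (φ : MForm) : Prop :=
  ∀ M : ModalEsakia, M.valid φ → M.frameValid φ

/-! ## Proof: soundness -/

theorem csat_upset (F : CondFrame) (V : ℕ → Set F.X) (hV : ∀ p, IsUpset F.le (V p)) :
    ∀ φ : CForm, IsUpset F.le (csat F.le F.R V φ)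
  | CForm.var p => hV p
  | CForm.bot => fun _ _ _ h => h
  | CForm.and φ ψ => fun _ _ h hx =>
      ⟨csat_upset F V hV φ h hx.1, csat_upset F V hV ψ h hx.2⟩
  | CForm.or φ ψ => fun _ _ h hx =>
      hx.elim (fun k => Or.inl (csat_upset F V hV φ h k))
        (fun k => Or.inr (csat_upset F V hV ψ h k))
  | CForm.imp _ _ => fun _ _ h hx z hz hzφ => hx z (F.le_trans h hz) hzφ
  | CForm.cond φ ψ => fun _ _ h hx z hz => by
      obtain ⟨w, hw, hwz⟩ := F.coh _ (csat_upset F V hV φ) h hz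
      exact csat_upset F V hV ψ hwz (hx w hw)

theorem csat_psubst {X : Type} (le : X → X → Prop) (R : Set X → X → X → Prop)
    (V : ℕ → Set X) (σ : ℕ → CForm) (φ : CForm) :
    csat le R V (psubst σ φ) = csat le R (fun p => csat le R V (σ p)) φ := by
  induction φ with
  | var p => rfl
  | bot => rfl
  | and φ ψ h1 h2 => simp only [psubst, csat, h1, h2]
  | or φ ψ h1 h2 => simp only [psubst, csat, h1, h2]
  | imp φ ψ h1 h2 => simp only [psubst, csat, h1, h2]
  | cond φ ψ h1 h2 => simp only [psubst, csat, h1, h2]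

theorem csat_eq_of_valid_iff {F : CondFrame} {φ ψ : CForm} (h : F.valid (cIff φ ψ))
    (V : ℕ → Set F.X) (hV : ∀ p, IsUpset F.le (V p)) :
    csat F.le F.R V φ = csat F.le F.R V ψ := by
  ext x
  exact ⟨(h V hV x).1 x (F.le_refl x), (h V hV x).2 x (F.le_refl x)⟩

theorem ick_sound (F : CondFrame) {φ : CForm} (h : ICK ∅ φ) : F.valid φ := by
  induction h with
  | prem h => exact h.elim
  | a1 => intro V hV x y _ hy; exact hy.1
  | a2 => intro V hV x y _ hy; exact hy.2
  | a3 =>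
    intro V hV x y _ hy z hyz hz w hzw hw
    exact ⟨hy w (F.le_trans hyz hzw) hw, hz w hzw hw⟩
  | a4 => intro V hV x y _ hy; exact Or.inl hy
  | a5 => intro V hV x y _ hy; exact Or.inr hy
  | a6 =>
    intro V hV x y _ hy z hyz hz w hzw hw
    exact hw.elim (hy w (F.le_trans hyz hzw)) (hz w hzw)
  | a7 => intro V hV x y _ hy; exact hy.elim
  | a8 => intro V hV x y _ hy z hyz _; exact hV 0 hyz hy
  | a9 =>
    intro V hV x y _ hy z hyz hz w hzw hw
    exact hy w (F.le_trans hyz hzw) hw w (F.le_refl w) (hz w hzw hw)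
  | kc =>
    intro V hV x
    refine ⟨fun y _ hy => ⟨fun z hz => (hy z hz).1, fun z hz => (hy z hz).2⟩, ?_⟩
    exact fun y _ hy z hz => ⟨hy.1 z hz, hy.2 z hz⟩
  | nc =>
    intro V hV x
    exact ⟨fun y _ _ z _ hz => hz, fun y _ _ z _ w _ hw => hw⟩
  | subst σ _ ih =>
    intro V hV x
    rw [csat_psubst]
    exact ih _ (fun p => csat_upset F V hV (σ p)) x
  | mp _ _ ih1 ih2 => intro V hV x; exact ih1 V hV x x (F.le_refl x) (ih2 V hV x)
  | congL _ ih =>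
    intro V hV x
    have e := csat_eq_of_valid_iff ih V hV
    constructor
    · intro y _ hy
      simp only [csat] at hy ⊢
      rwa [← e]
    · intro y _ hy
      simp only [csat] at hy ⊢
      rwa [e]
  | congR _ ih =>
    intro V hV x
    have e := csat_eq_of_valid_iff ih V hV
    constructor
    · intro y _ hy
      simp only [csat] at hy ⊢
      rwa [← e]
    · intro y _ hy
      simp only [csat] at hy ⊢
      rwa [e]

/-! ## Proof: completeness via the canonical model -/

/-- The substitution sending letters `0`, `1` and all others to `A`, `B`, `C`. -/
def sub3 (A B C : CForm) : ℕ → CForm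
  | 0 => A
  | 1 => B
  | _ => C

/-- Sets of formulas containing `ICK` and closed under modus ponens. -/
structure IsTheory (T : Set CForm) : Prop where
  ax : ∀ {φ}, ICK ∅ φ → φ ∈ T
  mp : ∀ {φ ψ}, CForm.imp φ ψ ∈ T → φ ∈ T → ψ ∈ T

theorem isTheory_ick : IsTheory {φ | ICK ∅ φ} := ⟨fun h => h, fun h k => ICK.mp h k⟩

theorem ick_refl (A : CForm) : ICK ∅ (CForm.imp A A) := by
  have h1 : ICK ∅ (CForm.imp A (CForm.imp (CForm.imp A A) A)) :=
    ICK.subst (sub3 A (CForm.imp A A) A) ICK.a8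
  have h2 : ICK ∅ (CForm.imp A (CForm.imp A A)) := ICK.subst (sub3 A A A) ICK.a8
  have h3 : ICK ∅ (CForm.imp (CForm.imp A (CForm.imp (CForm.imp A A) A))
      (CForm.imp (CForm.imp A (CForm.imp A A)) (CForm.imp A A))) :=
    ICK.subst (sub3 A (CForm.imp A A) A) ICK.a9
  exact ICK.mp (ICK.mp h3 h1) h2

namespace IsTheory

variable {T : Set CForm}

theorem andL (h : IsTheory T) {A B : CForm} (k : CForm.and A B ∈ T) : A ∈ T :=
  h.mp (h.ax (ICK.subst (sub3 A B A) ICK.a1)) k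

theorem andR (h : IsTheory T) {A B : CForm} (k : CForm.and A B ∈ T) : B ∈ T :=
  h.mp (h.ax (ICK.subst (sub3 A B A) ICK.a2)) k

theorem weak (h : IsTheory T) {A B : CForm} (k : A ∈ T) : CForm.imp B A ∈ T :=
  h.mp (h.ax (ICK.subst (sub3 A B A) ICK.a8)) k

theorem orL (h : IsTheory T) {A B : CForm} (k : A ∈ T) : CForm.or A B ∈ T :=
  h.mp (h.ax (ICK.subst (sub3 A B A) ICK.a4)) k

theorem orR (h : IsTheory T) {A B : CForm} (k : B ∈ T) : CForm.or A B ∈ T :=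
  h.mp (h.ax (ICK.subst (sub3 A B A) ICK.a5)) k

theorem orE (h : IsTheory T) {A B C : CForm} (k1 : CForm.imp A C ∈ T)
    (k2 : CForm.imp B C ∈ T) (k : CForm.or A B ∈ T) : C ∈ T :=
  h.mp (h.mp (h.mp (h.ax (ICK.subst (sub3 A B C) ICK.a6)) k1) k2) k

theorem botE (h : IsTheory T) {A : CForm} (k : CForm.bot ∈ T) : A ∈ T :=
  h.mp (h.ax (ICK.subst (sub3 A A A) ICK.a7)) k

theorem andI (h : IsTheory T) {A B : CForm} (k1 : A ∈ T) (k2 : B ∈ T) :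
    CForm.and A B ∈ T :=
  h.mp (h.mp (h.mp (h.ax (ICK.subst (sub3 A A B) ICK.a3)) (h.ax (ick_refl A)))
    (h.weak k2)) k1

theorem ded (h : IsTheory T) (A : CForm) : IsTheory {B | CForm.imp A B ∈ T} where
  ax k := h.weak (h.ax k)
  mp {B C} k1 k2 := h.mp (h.mp (h.ax (ICK.subst (sub3 A B C) ICK.a9)) k1) k2

theorem iffL (h : IsTheory T) {A B : CForm} (e : ICK ∅ (cIff A B)) (k : A ∈ T) : B ∈ T :=
  h.mp (h.andL (h.ax e)) k

theorem iffR (h : IsTheory T) {A B : CForm} (e : ICK ∅ (cIff A B)) (k : B ∈ T) : A ∈ T :=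
  h.mp (h.andR (h.ax e)) k

theorem condI (h : IsTheory T) {A B C : CForm} (k1 : CForm.cond A B ∈ T)
    (k2 : CForm.cond A C ∈ T) : CForm.cond A (CForm.and B C) ∈ T :=
  h.iffR (ICK.subst (sub3 A B C) ICK.kc) (h.andI k1 k2)

theorem condR (h : IsTheory T) {A B C : CForm}
    (k : CForm.cond A (CForm.and B C) ∈ T) : CForm.cond A C ∈ T :=
  h.andR (h.iffL (ICK.subst (sub3 A B C) ICK.kc) k)

theorem cond (h : IsTheory T) (A : CForm) : IsTheory {B | CForm.cond A B ∈ T} where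
  ax {B} k := by
    have e : ICK ∅ (cIff B cTop) :=
      isTheory_ick.andI (isTheory_ick.weak (ick_refl CForm.bot)) (isTheory_ick.weak k)
    exact h.iffR (ICK.congR e)
      (h.iffR (ICK.subst (sub3 A A A) ICK.nc) (h.ax (ick_refl CForm.bot)))
  mp {B C} k1 k2 := by
    have d := isTheory_ick.ded (CForm.and (CForm.imp B C) B)
    have r := ick_refl (CForm.and (CForm.imp B C) B)
    have e : ICK ∅ (cIff (CForm.and (CForm.imp B C) B)
        (CForm.and (CForm.and (CForm.imp B C) B) C)) :=
      isTheory_ick.andI (d.andI r (d.mp (d.andL r) (d.andR r)))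
        (ICK.subst (sub3 _ C C) ICK.a1)
    exact h.condR (h.iffL (ICK.congR e) (h.condI k1 k2))

/-- Prime extension (Lindenbaum) lemma. -/
theorem extend (h : IsTheory T) {ψ : CForm} (hψ : ψ ∉ T) :
    ∃ M : Set CForm, T ⊆ M ∧ IsTheory M ∧ ψ ∉ M ∧
      ∀ A B, CForm.or A B ∈ M → A ∈ M ∨ B ∈ M := by
  obtain ⟨M, hTM, hM⟩ := zorn_subset_nonempty {S : Set CForm | IsTheory S ∧ ψ ∉ S}
    (by
      intro c hc hchain hne
      refine ⟨⋃₀ c, ⟨⟨?_, ?_⟩, ?_⟩, fun s hs => Set.subset_sUnion_of_mem hs⟩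
      · intro φ hφ
        obtain ⟨s, hs⟩ := hne
        exact ⟨s, hs, (hc hs).1.ax hφ⟩
      · rintro A B ⟨s, hs, hAs⟩ ⟨t, ht, hAt⟩
        rcases hchain.total hs ht with hst | hst
        · exact ⟨t, ht, (hc ht).1.mp (hst hAs) hAt⟩
        · exact ⟨s, hs, (hc hs).1.mp hAs (hst hAt)⟩
      · rintro ⟨s, hs, hψs⟩
        exact (hc hs).2 hψs) T ⟨h, hψ⟩
  refine ⟨M, hTM, hM.prop.1, hM.prop.2, fun A B hAB => ?_⟩
  have key : ∀ C, C ∉ M → CForm.imp C ψ ∈ M := by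
    intro C hC
    by_contra hn
    have := hM.le_of_ge (y := {D | CForm.imp C D ∈ M}) ⟨hM.prop.1.ded C, hn⟩
      (fun D hD => hM.prop.1.weak hD)
    exact hC (this (hM.prop.1.ax (ick_refl C)))
  by_contra hn
  rw [not_or] at hn
  exact hM.prop.2 (hM.prop.1.orE (key A hn.1) (key B hn.2) hAB)

end IsTheory

/-- Prime theories: the worlds of the canonical model. -/
def PrimeTh : Type :=
  {T : Set CForm // IsTheory T ∧ CForm.bot ∉ T ∧ ∀ A B, CForm.or A B ∈ T → A ∈ T ∨ B ∈ T}

/-- Prime extension lemma, in terms of worlds. -/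
theorem exists_primeTh {T : Set CForm} (h : IsTheory T) {ψ : CForm} (hψ : ψ ∉ T) :
    ∃ x : PrimeTh, T ⊆ x.1 ∧ ψ ∉ x.1 := by
  obtain ⟨M, h1, h2, h3, h4⟩ := h.extend hψ
  exact ⟨⟨M, h2, fun k => h3 (h2.botE k), h4⟩, h1, h3⟩

theorem ick_iff_of_ext {φ ψ : CForm}
    (e : {z : PrimeTh | φ ∈ z.1} = {z : PrimeTh | ψ ∈ z.1}) : ICK ∅ (cIff φ ψ) := by
  have key : ∀ A B : CForm, (∀ z : PrimeTh, A ∈ z.1 → B ∈ z.1) → ICK ∅ (CForm.imp A B) := by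
    intro A B hz
    by_contra hn
    obtain ⟨x, hx, hB⟩ := exists_primeTh (isTheory_ick.ded A) (ψ := B) hn
    exact hB (hz x (hx (ick_refl A)))
  exact isTheory_ick.andI (key _ _ fun z hz => (Set.ext_iff.1 e z).1 hz)
    (key _ _ fun z hz => (Set.ext_iff.1 e z).2 hz)

/-- The canonical order. -/
def canLe (x y : PrimeTh) : Prop := x.1 ⊆ y.1

/-- The canonical relations (empty on upsets that are not truth sets). -/
def canR (a : Set PrimeTh) (x y : PrimeTh) : Prop :=
  ∃ φ, a = {z : PrimeTh | φ ∈ z.1} ∧ ∀ ψ, CForm.cond φ ψ ∈ x.1 → ψ ∈ y.1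

/-- The canonical valuation. -/
def canV (p : ℕ) : Set PrimeTh := {z | CForm.var p ∈ z.1}

theorem truth_lemma (φ : CForm) : csat canLe canR canV φ = {z : PrimeTh | φ ∈ z.1} := by
  induction φ with
  | var p => rfl
  | bot => ext x; exact ⟨fun h => h.elim, fun h => x.2.2.1 h⟩
  | and φ ψ h1 h2 =>
    simp only [csat, h1, h2]
    ext x
    exact ⟨fun h => x.2.1.andI h.1 h.2, fun h => ⟨x.2.1.andL h, x.2.1.andR h⟩⟩
  | or φ ψ h1 h2 =>
    simp only [csat, h1, h2]
    ext x
    exact ⟨fun h => h.elim (fun k => x.2.1.orL k) (fun k => x.2.1.orR k),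
      fun h => x.2.2.2 _ _ h⟩
  | imp φ ψ h1 h2 =>
    simp only [csat, h1, h2]
    ext x
    constructor
    · intro h
      by_contra hn
      obtain ⟨y, hy, hψ⟩ := exists_primeTh (x.2.1.ded φ) (ψ := ψ) hn
      exact hψ (h y (fun D hD => hy (x.2.1.weak hD)) (hy (x.2.1.ax (ick_refl φ))))
    · intro h y hxy hy
      exact y.2.1.mp (hxy h) hy
  | cond φ ψ h1 h2 =>
    simp only [csat, h1, h2]
    ext x
    constructor
    · intro h
      by_contra hn
      obtain ⟨y, hy, hψ⟩ := exists_primeTh (x.2.1.cond φ) (ψ := ψ) hn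
      exact hψ (h y ⟨φ, rfl, fun D hD => hy hD⟩)
    · rintro h y ⟨φ', e, hy⟩
      exact hy ψ (x.2.1.iffL (ICK.congL (ick_iff_of_ext e)) h)

/-- The canonical frame. -/
def canFrame (x : PrimeTh) : CondFrame where
  X := PrimeTh
  ne := ⟨x⟩
  le := canLe
  le_refl _ := subset_rfl
  le_trans _ _ _ h k := Set.Subset.trans h k
  R := canR
  coh := by
    rintro a _ x y z hxy ⟨φ, e, h⟩
    exact ⟨z, ⟨φ, e, fun ψ hψ => h ψ (hxy hψ)⟩, subset_rfl⟩

/-- `ICK` is sound and complete with respect to conditional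
Kripke frames: `φ ∈ ICK` iff `φ` is valid on every conditional Kripke
frame. -/
theorem ick_kripke_completeness (φ : CForm) :
    ICK ∅ φ ↔ ∀ F : CondFrame, F.valid φ := by
  constructor
  · exact fun h F => ick_sound F h
  · intro h
    by_contra hn
    obtain ⟨x, -, hx⟩ := exists_primeTh isTheory_ick (ψ := φ) hn
    have := h (canFrame x) canV (fun p y z hyz hy => hyz hy) x
    change x ∈ csat canLe canR canV φ at this
    rw [truth_lemma] at this
    exact hx this
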